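/- Fix real numbers u, v, w, r, t, y with u+v > 0, w > 0, r > 0, −2w < t < 2r and y > 0. For each positive integer N with 4N > y let q = q_N = exp(−2/√N) and θ = arccos(1 − y/(2N)). Then the limit as N → ∞ of N^{u+v} · [ (q;q)_∞ (−q^{v+w+t};q)_∞ (q^{u+v};q)_∞ (−q^{v+r};q)_∞ (−q^{u+w};q)_∞ (q^{w+r};q)_∞ (−q^{u+r−t};q)_∞ · (e^{2iθ};q)_∞ (e^{−2iθ};q)_∞ ] / [ 4πN (q^{u+v+w+r};q)_∞ √(y/N) √(1 − y/(4N)) · ∏_{σ∈{+1,−1}} (q^{v+t/2} e^{σiθ};q)_∞ (−q^{w+t/2} e^{σiθ};q)_∞ (q^{u−t/2} e^{σiθ};q)_∞ (−q^{r−t/2} e^{σiθ};q)_∞ ] exists and equals Γ(u+v+w+r) · |Γ(v+t/2+i√y/2)|² · |Γ(u−t/2+i√y/2)|² / ( 8π Γ(u+v) Γ(w+r) √y · |Γ(i√y)|² ). -/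

import Mathlib

open Filter

/-- Infinite q-Pochhammer symbol `(a;q)_∞ = ∏_{k=0}^∞ (1 - a q^k)` for complex `a, q`. -/
noncomputable def qPochInf (a q : ℂ) : ℂ := ∏' k : ℕ, (1 - a * q ^ k)

/-- Weak asymmetry scaling `q_N = exp(-2/√N)`. -/
noncomputable def qN (N : ℕ) : ℝ := Real.exp (-2 / Real.sqrt N)

/-- Real powers of `q_N`: `q_N^x = exp(-2x/√N)`, as a complex number. -/
noncomputable def qpow (N : ℕ) (x : ℝ) : ℂ := Complex.ofReal (Real.exp (-2 * x / Real.sqrt N))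

/-- `e^{ix}` for real `x`. -/
noncomputable def eI (x : ℝ) : ℂ := Complex.exp (Complex.I * x)

/-- `|Γ(a+ib)|² := Γ(a+ib)·Γ(a−ib)` for real `a, b`. -/
noncomputable def GammaSq (a b : ℝ) : ℂ :=
  Complex.Gamma ((a : ℂ) + (b : ℂ) * Complex.I) * Complex.Gamma ((a : ℂ) - (b : ℂ) * Complex.I)

/-!
With parameters that are powers of `q`, the `q`-Pochhammer symbols `(q ^ x; q)_∞` are `1 / Γ_q(x)`
up to elementary factors, and the symbols `(-q ^ x; q)_∞` are `q`-analogues of `2 ^ (1 - x)` up to a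
factor independent of `x`. After division all powers of `1 - q` but one cancel, and that one is
absorbed by `N ^ (u + v)` together with the Jacobian.

The limit `Γ_q → Γ`, locally uniform in `x`, comes from comparing Euler's product for `1 / Γ(x + 1)`
with its `q`-analogue. The logarithm of the `n`-th factor is a second-order difference of
`s ↦ log [s]_q` near `n + 1`, and `|(log [s]_q)''| ≤ 1 / (Re s) ^ 2` for every `q` in `(0, 1)`, so
the logarithms are `O(1 / n ^ 2)` uniformly in `q` and dominated convergence applies; the functional
equation extends the limit from `1 < Re x` to the whole plane. For the negative arguments,
`(-a; q)_∞ (a; q)_∞ = (a ^ 2; q ^ 2)_∞` reduces the claim to `Γ_q / Γ_{q ^ 2} → 1`.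
-/

open Topology

section qPochhammer

lemma summable_norm_mul_pow (a : ℂ) {q : ℂ} (hq : ‖q‖ < 1) :
    Summable fun k : ℕ => ‖-(a * q ^ k)‖ := by
  simpa using (summable_geometric_of_lt_one (norm_nonneg q) hq).mul_left ‖a‖

lemma multipliable_one_sub_mul_pow (a : ℂ) {q : ℂ} (hq : ‖q‖ < 1) :
    Multipliable fun k : ℕ => 1 - a * q ^ k := by
  simpa only [sub_eq_add_neg] using multipliable_one_add_of_summable (summable_norm_mul_pow a hq)

lemma tendsto_prod_range_qPochInf (a : ℂ) {q : ℂ} (hq : ‖q‖ < 1) :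
    Tendsto (fun m : ℕ => ∏ k ∈ Finset.range m, (1 - a * q ^ k)) atTop (𝓝 (qPochInf a q)) :=
  (multipliable_one_sub_mul_pow a hq).hasProd.tendsto_prod_nat

lemma qPochInf_eq_one_sub_mul (a : ℂ) {q : ℂ} (hq : ‖q‖ < 1) :
    qPochInf a q = (1 - a) * qPochInf (a * q) q := by
  have hmult : Multipliable fun k : ℕ => 1 - a * q ^ (k + 1) := by
    simpa only [pow_succ', mul_assoc] using multipliable_one_sub_mul_pow (a * q) hq
  rw [qPochInf, tprod_eq_zero_mul' (f := fun k : ℕ => 1 - a * q ^ k) hmult, pow_zero, mul_one,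
    qPochInf]
  exact congrArg _ (tprod_congr fun k => by ring)

lemma qPochInf_neg_mul_qPochInf (a : ℂ) {q : ℂ} (hq : ‖q‖ < 1) :
    qPochInf (-a) q * qPochInf a q = qPochInf (a ^ 2) (q ^ 2) := by
  unfold qPochInf
  rw [← (multipliable_one_sub_mul_pow (-a) hq).tprod_mul (multipliable_one_sub_mul_pow a hq)]
  exact tprod_congr fun k => by ring

lemma qPochInf_ne_zero {a q : ℂ} (ha : ‖a‖ < 1) (hq : ‖q‖ < 1) : qPochInf a q ≠ 0 := by
  have hterm (k : ℕ) : ‖a * q ^ k‖ < 1 := by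
    rw [norm_mul, norm_pow]
    exact mul_lt_one_of_nonneg_of_lt_one_left (norm_nonneg a) ha
      (pow_le_one₀ (norm_nonneg q) hq.le)
  have hfactor (k : ℕ) : 1 + -(a * q ^ k) ≠ 0 := fun h => by
    have hone : a * q ^ k = 1 := by linear_combination -h
    simpa only [hone, norm_one, lt_self_iff_false] using hterm k
  simpa only [qPochInf, sub_eq_add_neg] using
    tprod_one_add_ne_zero_of_summable hfactor (summable_norm_mul_pow a hq)

end qPochhammer

section EulerProduct

/-- The logarithm of the `n`-th factor `(1 + x / (n + 1)) * (1 + 1 / (n + 1)) ^ (-x)` of Euler's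
product for `1 / Γ (x + 1)`, with an arbitrary function `g` in place of the logarithm. -/
noncomputable def eulerLogTerm (g : ℂ → ℂ) (x : ℂ) (n : ℕ) : ℂ :=
  g (n + 1 + x) - g (n + 1) - x * (g (n + 1 + 1) - g (n + 1))

lemma prod_exp_eulerLogTerm (g : ℂ → ℂ) (x : ℂ) (m : ℕ) :
    ∏ n ∈ Finset.range m, Complex.exp (eulerLogTerm g x n) =
      (∏ n ∈ Finset.range m, Complex.exp (g (n + 1 + x)) / Complex.exp (g (n + 1))) *
        Complex.exp (x * (g 1 - g (m + 1))) := by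
  have htele : ∑ n ∈ Finset.range m, (g ((n : ℂ) + 1 + 1) - g (n + 1)) = g (m + 1) - g 1 := by
    simpa using Finset.sum_range_sub (fun n : ℕ => g (n + 1)) m
  simp only [← Complex.exp_sub, ← Complex.exp_sum, eulerLogTerm, ← Complex.exp_add,
    Finset.sum_sub_distrib (fun n : ℕ => g (n + 1 + x) - g (n + 1)), ← Finset.mul_sum, htele]
  congr 1
  ring

lemma norm_sub_sub_smul_deriv_le {𝕜 E : Type*} [RCLike 𝕜] [NormedAddCommGroup E] [NormedSpace 𝕜 E]
    {f f' f'' : 𝕜 → E} {s : Set 𝕜} (hs : Convex ℝ s) (hf : ∀ z ∈ s, HasDerivAt f (f' z) z)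
    (hf' : ∀ z ∈ s, HasDerivAt f' (f'' z) z) {C : ℝ} (hC : ∀ z ∈ s, ‖f'' z‖ ≤ C) {a b : 𝕜}
    (ha : a ∈ s) (hb : b ∈ s) : ‖f b - f a - (b - a) • f' a‖ ≤ C * ‖b - a‖ ^ 2 := by
  set t := s ∩ Metric.closedBall a ‖b - a‖
  have ht : Convex ℝ t := hs.inter (convex_closedBall _ _)
  have hat : a ∈ t := ⟨ha, by simp⟩
  have hbt : b ∈ t := ⟨hb, by simp [dist_eq_norm]⟩
  have hC0 : 0 ≤ C := (norm_nonneg _).trans (hC a ha)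
  have hf'_sub (z) (hz : z ∈ t) : ‖f' z - f' a‖ ≤ C * ‖b - a‖ := by
    refine (ht.norm_image_sub_le_of_norm_hasDerivWithin_le
      (fun w hw => (hf' w hw.1).hasDerivWithinAt) (fun w hw => hC w hw.1) hat hz).trans ?_
    gcongr
    exact mem_closedBall_iff_norm.1 hz.2
  have hderiv (z) (hz : z ∈ t) :
      HasDerivWithinAt (fun w => f w - w • f' a) (f' z - f' a) t z := by
    have := (hf z hz.1).sub ((hasDerivAt_id z).smul_const (f' a))
    rw [one_smul] at this
    exact this.hasDerivWithinAt
  calc ‖f b - f a - (b - a) • f' a‖ = ‖(f b - b • f' a) - (f a - a • f' a)‖ := by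
        rw [sub_smul]; abel_nf
    _ ≤ C * ‖b - a‖ * ‖b - a‖ :=
      ht.norm_image_sub_le_of_norm_hasDerivWithin_le hderiv hf'_sub hat hbt
    _ = C * ‖b - a‖ ^ 2 := by ring

lemma norm_eulerLogTerm_le {g g' g'' : ℂ → ℂ} (hg : ∀ s, 0 < s.re → HasDerivAt g (g' s) s)
    (hg' : ∀ s, 0 < s.re → HasDerivAt g' (g'' s) s)
    (hbound : ∀ s, 0 < s.re → ‖g'' s‖ ≤ 1 / s.re ^ 2) {x : ℂ} (hx : 0 ≤ x.re) (n : ℕ) :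
    ‖eulerLogTerm g x n‖ ≤ (‖x‖ ^ 2 + ‖x‖) * (1 / ((n : ℝ) + 1) ^ 2) := by
  have hn : (0 : ℝ) < n + 1 := by positivity
  have htaylor {z : ℂ} (hz : 0 ≤ z.re) :
      ‖g (n + 1 + z) - g (n + 1) - z * g' (n + 1)‖ ≤ 1 / ((n : ℝ) + 1) ^ 2 * ‖z‖ ^ 2 := by
    have hpos (s : ℂ) (hs : (n + 1 : ℝ) ≤ s.re) : 0 < s.re := hn.trans_le hs
    have := norm_sub_sub_smul_deriv_le (convex_halfSpace_re_ge (n + 1 : ℝ))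
      (fun s hs => hg s (hpos s hs)) (fun s hs => hg' s (hpos s hs)) (C := 1 / ((n : ℝ) + 1) ^ 2)
      (fun s hs => (hbound s (hpos s hs)).trans (by gcongr; exact hs))
      (a := n + 1) (b := n + 1 + z) (by simp) (by simpa using hz)
    simpa only [add_sub_cancel_left, smul_eq_mul] using this
  calc ‖eulerLogTerm g x n‖
      = ‖(g (n + 1 + x) - g (n + 1) - x * g' (n + 1)) -
          x * (g (n + 1 + 1) - g (n + 1) - 1 * g' (n + 1))‖ := by
        unfold eulerLogTerm; ring_nf
    _ ≤ 1 / ((n : ℝ) + 1) ^ 2 * ‖x‖ ^ 2 + ‖x‖ * (1 / ((n : ℝ) + 1) ^ 2 * ‖(1 : ℂ)‖ ^ 2) := by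
        refine (norm_sub_le _ _).trans ?_
        rw [norm_mul x]
        gcongr
        · exact htaylor hx
        · exact htaylor (by simp)
    _ = (‖x‖ ^ 2 + ‖x‖) * (1 / ((n : ℝ) + 1) ^ 2) := by rw [norm_one]; ring

lemma summable_one_div_nat_add_one_sq : Summable fun n : ℕ => 1 / ((n : ℝ) + 1) ^ 2 := by
  simpa using (summable_nat_add_iff 1).2 (Real.summable_nat_pow_inv.2 one_lt_two)

lemma norm_eulerLogTerm_log_le {x : ℂ} (hx : 0 ≤ x.re) (n : ℕ) :
    ‖eulerLogTerm Complex.log x n‖ ≤ (‖x‖ ^ 2 + ‖x‖) * (1 / ((n : ℝ) + 1) ^ 2) := by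
  have hne {s : ℂ} (hs : 0 < s.re) : s ≠ 0 := Complex.slitPlane_ne_zero (Or.inl hs)
  refine norm_eulerLogTerm_le (fun s hs => Complex.hasDerivAt_log (Or.inl hs))
    (fun s hs => hasDerivAt_inv (hne hs)) (fun s hs => ?_) hx n
  rw [norm_neg, norm_inv, norm_pow, ← one_div]
  gcongr
  exact Complex.re_le_norm s

lemma tendsto_exp_mul_log_sub_log_add_one (x : ℂ) :
    Tendsto (fun m : ℕ => Complex.exp (x * (Complex.log m - Complex.log (m + 1)))) atTop (𝓝 1) := by
  have hreal := (Complex.continuous_ofReal.tendsto 0).comp Real.tendsto_log_nat_add_one_sub_log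
  have hlim := (hreal.const_mul (-x)).cexp
  simp only [Complex.ofReal_zero, mul_zero, Complex.exp_zero] at hlim
  refine hlim.congr fun m => ?_
  simp only [Function.comp_apply, Complex.ofReal_sub, Complex.natCast_log,
    Complex.ofReal_log (m.cast_add_one_pos.le : (0 : ℝ) ≤ m + 1)]
  push_cast
  ring_nf

lemma exp_tsum_eulerLogTerm_log {x : ℂ} (hx : 0 < x.re) :
    Complex.exp (∑' n, eulerLogTerm Complex.log x n) = (Complex.Gamma (x + 1))⁻¹ := by
  have hx0 : x ≠ 0 := Complex.slitPlane_ne_zero (Or.inl hx)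
  have hsum : Summable (eulerLogTerm Complex.log x) :=
    .of_norm_bounded (summable_one_div_nat_add_one_sq.mul_left _) (norm_eulerLogTerm_log_le hx.le)
  have hseq := ((Complex.GammaSeq_tendsto_Gamma x).const_mul x).inv₀
    (mul_ne_zero hx0 (Complex.Gamma_ne_zero_of_re_pos hx))
  have hlim := hseq.mul (tendsto_exp_mul_log_sub_log_add_one x)
  rw [mul_one, ← Complex.Gamma_add_one x hx0] at hlim
  refine tendsto_nhds_unique hsum.hasSum.cexp.tendsto_prod_nat (hlim.congr' ?_)
  filter_upwards [eventually_ne_atTop 0] with m hm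
  have hexp (z : ℂ) (hz : 0 < z.re) : Complex.exp (Complex.log z) = z :=
    Complex.exp_log (Complex.slitPlane_ne_zero (Or.inl hz))
  have hfactor (n : ℕ) : Complex.exp (Complex.log (n + 1 + x)) / Complex.exp (Complex.log (n + 1)) =
      (x + (n + 1 : ℕ)) / (n + 1 : ℕ) := by
    have hn : 0 < ((n : ℂ) + 1).re := by simpa using n.cast_add_one_pos
    rw [hexp _ (by simpa only [Complex.add_re] using add_pos hn hx), hexp _ hn]
    push_cast
    ring
  have hfact : ∏ n ∈ Finset.range m, ((n + 1 : ℕ) : ℂ) = m.factorial := by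
    rw [← Nat.cast_prod, Finset.prod_range_add_one_eq_factorial]
  simp only [Function.comp_apply]
  rw [prod_exp_eulerLogTerm, Finset.prod_congr rfl fun n _ => hfactor n, Finset.prod_div_distrib,
    hfact, Complex.GammaSeq, Finset.prod_range_succ', Complex.log_one, zero_sub, mul_sub,
    Complex.exp_sub, Complex.cpow_def_of_ne_zero (Nat.cast_ne_zero.2 hm), mul_neg, Complex.exp_neg,
    mul_comm (Complex.log _) x, Nat.cast_zero, add_zero]
  field_simp [Complex.exp_ne_zero]

end EulerProduct

section QBracket

/-- The `q`-analogue `[s]_q = (1 - q ^ s) / (1 - q)` of the number `s`. -/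
noncomputable def qBracket (q : ℝ) (s : ℂ) : ℂ := (1 - (q : ℂ) ^ s) / (1 - q)

variable {q : ℝ}

lemma norm_ofReal_lt_one (hq0 : 0 < q) (hq1 : q < 1) : ‖(q : ℂ)‖ < 1 := by
  rwa [Complex.norm_of_nonneg hq0.le]

lemma norm_ofReal_cpow_lt_one (hq0 : 0 < q) (hq1 : q < 1) {s : ℂ} (hs : 0 < s.re) :
    ‖(q : ℂ) ^ s‖ < 1 := by
  rw [Complex.norm_cpow_eq_rpow_re_of_pos hq0]
  exact Real.rpow_lt_one hq0.le hq1 hs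

lemma one_sub_ofReal_ne_zero (hq1 : q < 1) : 1 - (q : ℂ) ≠ 0 := by
  exact_mod_cast (sub_pos.2 hq1).ne'

lemma qBracket_one (hq1 : q < 1) : qBracket q 1 = 1 := by
  rw [qBracket, Complex.cpow_one, div_self (one_sub_ofReal_ne_zero hq1)]

lemma qBracket_mem_slitPlane (hq0 : 0 < q) (hq1 : q < 1) {s : ℂ} (hs : 0 < s.re) :
    qBracket q s ∈ Complex.slitPlane := by
  left
  have hre : ((q : ℂ) ^ s).re < 1 :=
    (Complex.re_le_norm _).trans_lt (norm_ofReal_cpow_lt_one hq0 hq1 hs)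
  have hcast : (1 - q : ℂ) = ((1 - q : ℝ) : ℂ) := by push_cast; rfl
  rw [qBracket, hcast, Complex.div_ofReal_re]
  exact div_pos (by simpa using hre) (sub_pos.2 hq1)

lemma hasDerivAt_ofReal_cpow (hq0 : 0 < q) (s : ℂ) :
    HasDerivAt (fun s => (q : ℂ) ^ s) ((q : ℂ) ^ s * Real.log q) s := by
  simpa [Complex.ofReal_log hq0.le] using
    (hasDerivAt_id s).const_cpow (Or.inl (Complex.ofReal_ne_zero.2 hq0.ne'))

lemma one_sub_ofReal_cpow_ne_zero (hq0 : 0 < q) (hq1 : q < 1) {s : ℂ} (hs : 0 < s.re) :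
    1 - (q : ℂ) ^ s ≠ 0 := fun h => by
  simpa only [← sub_eq_zero.1 h, norm_one, lt_self_iff_false] using
    norm_ofReal_cpow_lt_one hq0 hq1 hs

lemma hasDerivAt_log_qBracket (hq0 : 0 < q) (hq1 : q < 1) {s : ℂ} (hs : 0 < s.re) :
    HasDerivAt (fun s => Complex.log (qBracket q s))
      (-((q : ℂ) ^ s * Real.log q) / (1 - (q : ℂ) ^ s)) s := by
  have h := (((hasDerivAt_ofReal_cpow hq0 s).const_sub 1).div_const (1 - (q : ℂ))).clog
    (qBracket_mem_slitPlane hq0 hq1 hs)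
  refine h.congr_deriv ?_
  rw [div_div_div_cancel_right₀ (one_sub_ofReal_ne_zero hq1)]

lemma hasDerivAt_deriv_log_qBracket (hq0 : 0 < q) (hq1 : q < 1) {s : ℂ} (hs : 0 < s.re) :
    HasDerivAt (fun s => -((q : ℂ) ^ s * Real.log q) / (1 - (q : ℂ) ^ s))
      (-((Real.log q) ^ 2 * (q : ℂ) ^ s / (1 - (q : ℂ) ^ s) ^ 2)) s := by
  have h := hasDerivAt_ofReal_cpow hq0 s
  refine ((h.mul_const _).neg.div (h.const_sub 1)
    (one_sub_ofReal_cpow_ne_zero hq0 hq1 hs)).congr_deriv ?_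
  rw [← neg_div]
  congr 1
  simp only [Pi.neg_apply]
  ring

lemma sq_mul_exp_le_one_sub_exp_sq (c : ℝ) : c ^ 2 * Real.exp c ≤ (1 - Real.exp c) ^ 2 := by
  have hsinh : (c / 2) ^ 2 ≤ Real.sinh (c / 2) ^ 2 := by
    rw [sq_le_sq, Real.abs_sinh]
    exact Real.self_le_sinh_iff.2 (abs_nonneg _)
  have hexp : Real.exp c = Real.exp (c / 2) ^ 2 := by rw [← Real.exp_nat_mul]; ring_nf
  calc c ^ 2 * Real.exp c = 4 * (c / 2) ^ 2 * Real.exp c := by ring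
    _ ≤ 4 * Real.sinh (c / 2) ^ 2 * Real.exp c := by gcongr
    _ = (1 - Real.exp c) ^ 2 := by
      rw [Real.sinh_eq, Real.exp_neg, hexp]
      field_simp
      ring

lemma norm_deriv_deriv_log_qBracket_le (hq0 : 0 < q) (hq1 : q < 1) {s : ℂ} (hs : 0 < s.re) :
    ‖-((Real.log q : ℂ) ^ 2 * (q : ℂ) ^ s / (1 - (q : ℂ) ^ s) ^ 2)‖ ≤ 1 / s.re ^ 2 := by
  have hnorm : ‖(q : ℂ) ^ s‖ = Real.exp (Real.log q * s.re) := by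
    rw [Complex.norm_cpow_eq_rpow_re_of_pos hq0, Real.rpow_def_of_pos hq0]
  have hpos : 0 < 1 - Real.exp (Real.log q * s.re) := by
    rw [← hnorm]
    exact sub_pos.2 (norm_ofReal_cpow_lt_one hq0 hq1 hs)
  have hden : 1 - Real.exp (Real.log q * s.re) ≤ ‖1 - (q : ℂ) ^ s‖ := by
    simpa only [hnorm, norm_one] using norm_sub_norm_le (1 : ℂ) ((q : ℂ) ^ s)
  rw [norm_neg, norm_div, norm_mul, norm_pow, norm_pow, hnorm, Complex.norm_real,
    Real.norm_eq_abs, sq_abs]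
  calc (Real.log q) ^ 2 * Real.exp (Real.log q * s.re) / ‖1 - (q : ℂ) ^ s‖ ^ 2
      ≤ (Real.log q) ^ 2 * Real.exp (Real.log q * s.re) /
          (1 - Real.exp (Real.log q * s.re)) ^ 2 := by gcongr
    _ ≤ 1 / s.re ^ 2 := by
      rw [div_le_div_iff₀ (by positivity) (by positivity)]
      linarith [sq_mul_exp_le_one_sub_exp_sq (Real.log q * s.re),
        mul_pow (Real.log q) s.re 2 ▸ mul_right_comm ((Real.log q) ^ 2) (s.re ^ 2)
          (Real.exp (Real.log q * s.re))]

lemma norm_eulerLogTerm_qBracket_le (hq0 : 0 < q) (hq1 : q < 1) {x : ℂ} (hx : 0 ≤ x.re) (n : ℕ) :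
    ‖eulerLogTerm (fun s => Complex.log (qBracket q s)) x n‖ ≤
      (‖x‖ ^ 2 + ‖x‖) * (1 / ((n : ℝ) + 1) ^ 2) :=
  norm_eulerLogTerm_le (fun _ => hasDerivAt_log_qBracket hq0 hq1)
    (fun _ => hasDerivAt_deriv_log_qBracket hq0 hq1)
    (fun _ => norm_deriv_deriv_log_qBracket_le hq0 hq1) hx n

lemma ofReal_cpow_natCast_add_one (hq0 : 0 < q) (n : ℕ) :
    (q : ℂ) ^ ((n : ℂ) + 1) = q * (q : ℂ) ^ n := by
  rw [Complex.cpow_add _ _ (Complex.ofReal_ne_zero.2 hq0.ne'), Complex.cpow_natCast,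
    Complex.cpow_one, mul_comm]

lemma tendsto_log_qBracket_natCast_add_one (hq0 : 0 < q) (hq1 : q < 1) :
    Tendsto (fun m : ℕ => Complex.log (qBracket q (m + 1))) atTop
      (𝓝 (-Complex.log (1 - q : ℂ))) := by
  have hpos : 0 < 1 - q := sub_pos.2 hq1
  have hcast : (1 - q : ℂ) = ((1 - q : ℝ) : ℂ) := by push_cast; rfl
  have hbracket : Tendsto (fun m : ℕ => qBracket q (m + 1)) atTop (𝓝 (1 - q : ℂ)⁻¹) := by
    have hpow := tendsto_pow_atTop_nhds_zero_of_norm_lt_one (norm_ofReal_lt_one hq0 hq1)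
    simpa only [qBracket, ofReal_cpow_natCast_add_one hq0, mul_zero, sub_zero, one_div] using
      ((hpow.const_mul (q : ℂ)).const_sub 1).div_const (1 - q : ℂ)
  have hslit : (1 - q : ℂ)⁻¹ ∈ Complex.slitPlane := by
    rw [hcast, ← Complex.ofReal_inv]
    exact Complex.ofReal_mem_slitPlane.2 (inv_pos.2 hpos)
  have harg : (1 - q : ℂ).arg ≠ Real.pi := by
    rw [hcast, Complex.arg_ofReal_of_nonneg hpos.le]
    exact Real.pi_pos.ne
  rw [← Complex.log_inv _ harg]
  exact hbracket.clog hslit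

lemma tendsto_qBracket {ι : Type*} {l : Filter ι} {q : ι → ℝ} (hq : Tendsto q l (𝓝[<] 1))
    {s : ι → ℂ} {s₀ : ℂ} (hs : Tendsto s l (𝓝 s₀)) :
    Tendsto (fun i => qBracket (q i) (s i)) l (𝓝 s₀) := by
  have hq1 : Tendsto q l (𝓝 1) := hq.mono_right nhdsWithin_le_nhds
  have hdlog : Tendsto (fun i => ((dslope Real.log 1 (q i) : ℝ) : ℂ)) l (𝓝 1) := by
    have hcont : ContinuousAt (dslope Real.log 1) 1 :=
      continuousAt_dslope_same.2 (Real.differentiableAt_log one_ne_zero)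
    have := (hcont.tendsto.comp hq1).ofReal
    simpa [dslope_same] using this
  have hdexp : Tendsto (fun i => dslope Complex.exp 0 (Real.log (q i) * s i)) l (𝓝 1) := by
    have hcont : ContinuousAt (dslope Complex.exp 0) 0 :=
      continuousAt_dslope_same.2 Complex.differentiable_exp.differentiableAt
    have harg : Tendsto (fun i => (Real.log (q i) : ℂ) * s i) l (𝓝 0) := by
      simpa using (hq1.log one_ne_zero).ofReal.mul hs
    simpa [Function.comp_def, dslope_same] using hcont.tendsto.comp harg
  have hlim := (hdlog.mul hdexp).mul hs
  rw [one_mul, one_mul] at hlim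
  refine hlim.congr' ?_
  filter_upwards [hq.eventually (Ioo_mem_nhdsLT one_pos)] with i ⟨hi0, hi1⟩
  have hlog : (Real.log (q i) : ℂ) = (q i - 1) * (dslope Real.log 1 (q i) : ℝ) := by
    have := sub_smul_dslope Real.log 1 (q i)
    rw [smul_eq_mul, Real.log_one, sub_zero] at this
    exact_mod_cast this.symm
  have hexp : (q i : ℂ) ^ s i = 1 + Real.log (q i) * s i *
      dslope Complex.exp 0 (Real.log (q i) * s i) := by
    have := sub_smul_dslope Complex.exp 0 (Real.log (q i) * s i)
    rw [smul_eq_mul, Complex.exp_zero, sub_zero] at this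
    rw [Complex.cpow_def_of_ne_zero (Complex.ofReal_ne_zero.2 hi0.ne'),
      ← Complex.ofReal_log hi0.le]
    linear_combination -this
  rw [qBracket, eq_div_iff (one_sub_ofReal_ne_zero hi1), hexp]
  linear_combination s i * dslope Complex.exp 0 (Real.log (q i) * s i) * hlog

end QBracket

section QGamma

/-- Jackson's `q`-Gamma function `Γ_q(x) = (q;q)_∞ / (q ^ x;q)_∞ * (1 - q) ^ (1 - x)`. Division by
zero gives it the value `0` at its poles, so that `(qGamma q x)⁻¹` is correct for all `x`. -/
noncomputable def qGamma (q : ℝ) (x : ℂ) : ℂ :=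
  qPochInf q q / qPochInf ((q : ℂ) ^ x) q * (1 - q : ℂ) ^ (1 - x)

/-- The ratio `(-q ^ x;q)_∞ / (-q;q)_∞`, a `q`-analogue of `2 ^ (1 - x)`. -/
noncomputable def negPochRatio (q : ℝ) (x : ℂ) : ℂ :=
  qPochInf (-((q : ℂ) ^ x)) q / qPochInf (-(q : ℂ)) q

variable {q : ℝ} {ι : Type*} {l : Filter ι} {qs : ι → ℝ} {xs : ι → ℂ} {x₀ : ℂ}

lemma qPochInf_self_ne_zero (hq0 : 0 < q) (hq1 : q < 1) : qPochInf q q ≠ 0 :=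
  qPochInf_ne_zero (norm_ofReal_lt_one hq0 hq1) (norm_ofReal_lt_one hq0 hq1)

lemma qPochInf_neg_self_ne_zero (hq0 : 0 < q) (hq1 : q < 1) : qPochInf (-(q : ℂ)) q ≠ 0 :=
  qPochInf_ne_zero (by rw [norm_neg]; exact norm_ofReal_lt_one hq0 hq1)
    (norm_ofReal_lt_one hq0 hq1)

lemma qPochInf_eq_mul_inv_qGamma (hq0 : 0 < q) (hq1 : q < 1) (x : ℂ) :
    qPochInf ((q : ℂ) ^ x) q = qPochInf q q * (1 - q : ℂ) ^ (1 - x) * (qGamma q x)⁻¹ := by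
  have hne : (1 - q : ℂ) ^ (1 - x) ≠ 0 :=
    Complex.cpow_ne_zero_iff.2 (Or.inl (one_sub_ofReal_ne_zero hq1))
  rw [qGamma, mul_inv, inv_div]
  field_simp [qPochInf_self_ne_zero hq0 hq1]

lemma qPochInf_neg_eq_mul_negPochRatio (hq0 : 0 < q) (hq1 : q < 1) (x : ℂ) :
    qPochInf (-((q : ℂ) ^ x)) q = qPochInf (-(q : ℂ)) q * negPochRatio q x :=
  (mul_div_cancel₀ _ (qPochInf_neg_self_ne_zero hq0 hq1)).symm

lemma inv_qGamma_eq_qBracket_mul (hq0 : 0 < q) (hq1 : q < 1) (x : ℂ) :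
    (qGamma q x)⁻¹ = qBracket q x * (qGamma q (x + 1))⁻¹ := by
  have hq : (q : ℂ) ≠ 0 := Complex.ofReal_ne_zero.2 hq0.ne'
  have hpow : (1 - q : ℂ) ^ (1 - x) = (1 - q) * (1 - q : ℂ) ^ (1 - (x + 1)) := by
    rw [show 1 - x = 1 + (1 - (x + 1)) by ring,
      Complex.cpow_add _ _ (one_sub_ofReal_ne_zero hq1), Complex.cpow_one]
  rw [qGamma, qGamma, hpow,
    qPochInf_eq_one_sub_mul ((q : ℂ) ^ x) (norm_ofReal_lt_one hq0 hq1), qBracket,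
    Complex.cpow_add _ _ hq, Complex.cpow_one]
  simp only [mul_inv, inv_div]
  ring

lemma negPochRatio_eq_one_add_mul (hq0 : 0 < q) (hq1 : q < 1) (x : ℂ) :
    negPochRatio q x = (1 + (q : ℂ) ^ x) * negPochRatio q (x + 1) := by
  rw [negPochRatio, negPochRatio, qPochInf_eq_one_sub_mul _ (norm_ofReal_lt_one hq0 hq1),
    sub_neg_eq_add, neg_mul, Complex.cpow_add _ _ (Complex.ofReal_ne_zero.2 hq0.ne'),
    Complex.cpow_one, mul_div_assoc]

lemma exp_tsum_eulerLogTerm_qBracket (hq0 : 0 < q) (hq1 : q < 1) {x : ℂ} (hx : 0 ≤ x.re) :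
    Complex.exp (∑' n, eulerLogTerm (fun s => Complex.log (qBracket q s)) x n) =
      (qGamma q (x + 1))⁻¹ := by
  have hq : (q : ℂ) ≠ 0 := Complex.ofReal_ne_zero.2 hq0.ne'
  have hqn := norm_ofReal_lt_one hq0 hq1
  have hsum : Summable (eulerLogTerm (fun s => Complex.log (qBracket q s)) x) :=
    .of_norm_bounded (summable_one_div_nat_add_one_sq.mul_left _)
      (norm_eulerLogTerm_qBracket_le hq0 hq1 hx)
  have hexp {s : ℂ} (hs : 0 < s.re) : Complex.exp (Complex.log (qBracket q s)) = qBracket q s :=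
    Complex.exp_log (Complex.slitPlane_ne_zero (qBracket_mem_slitPlane hq0 hq1 hs))
  have hfactor (n : ℕ) : Complex.exp (Complex.log (qBracket q (n + 1 + x))) /
      Complex.exp (Complex.log (qBracket q (n + 1))) =
        (1 - (q : ℂ) ^ (x + 1) * q ^ n) / (1 - q * q ^ n) := by
    have hn : 0 < ((n : ℂ) + 1).re := by simpa using n.cast_add_one_pos
    have hnx : 0 < ((n : ℂ) + 1 + x).re := by
      simpa only [Complex.add_re] using add_pos_of_pos_of_nonneg hn hx
    rw [hexp hnx, hexp hn, qBracket, qBracket,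
      div_div_div_cancel_right₀ (one_sub_ofReal_ne_zero hq1), Complex.cpow_add _ _ hq,
      ofReal_cpow_natCast_add_one hq0, Complex.cpow_add _ _ hq, Complex.cpow_one]
    ring_nf
  have hprod : Tendsto (fun m : ℕ => ∏ n ∈ Finset.range m,
      (1 - (q : ℂ) ^ (x + 1) * q ^ n) / (1 - q * q ^ n)) atTop
      (𝓝 (qPochInf ((q : ℂ) ^ (x + 1)) q / qPochInf q q)) := by
    simp only [Finset.prod_div_distrib]
    exact (tendsto_prod_range_qPochInf _ hqn).div (tendsto_prod_range_qPochInf _ hqn)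
      (qPochInf_self_ne_zero hq0 hq1)
  have hlog : Tendsto (fun m : ℕ => Complex.exp (x * (Complex.log (qBracket q 1) -
      Complex.log (qBracket q (m + 1))))) atTop (𝓝 ((1 - q : ℂ) ^ x)) := by
    have hlim : x * (0 - -Complex.log (1 - q : ℂ)) = Complex.log (1 - q : ℂ) * x := by ring
    rw [qBracket_one hq1, Complex.log_one,
      Complex.cpow_def_of_ne_zero (one_sub_ofReal_ne_zero hq1), ← hlim]
    exact (((tendsto_log_qBracket_natCast_add_one hq0 hq1).const_sub 0).const_mul x).cexp
  refine tendsto_nhds_unique hsum.hasSum.cexp.tendsto_prod_nat ?_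
  simp only [Function.comp_apply, prod_exp_eulerLogTerm, hfactor]
  convert hprod.mul hlog using 2
  rw [qGamma, mul_inv, inv_div, ← Complex.cpow_neg]
  ring_nf

lemma negPochRatio_eq_qGamma_div_qGamma_sq (hq0 : 0 < q) (hq1 : q < 1) {x : ℂ} (hx : 0 < x.re) :
    negPochRatio q x = (1 + q : ℂ) ^ (1 - x) * (qGamma q x / qGamma (q ^ 2) x) := by
  have hqn := norm_ofReal_lt_one hq0 hq1
  have hq2 : (q : ℂ) ^ 2 = (q ^ 2 : ℝ) := by push_cast; rfl
  have hself := qPochInf_neg_mul_qPochInf (q : ℂ) hqn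
  have hcpow := qPochInf_neg_mul_qPochInf ((q : ℂ) ^ x) hqn
  have hne : qPochInf ((q : ℂ) ^ x) q ≠ 0 :=
    qPochInf_ne_zero (norm_ofReal_cpow_lt_one hq0 hq1 hx) hqn
  have hpow : ((q : ℂ) ^ x) ^ 2 = ((q ^ 2 : ℝ) : ℂ) ^ x := by
    rw [sq, ← Complex.mul_cpow_ofReal_nonneg hq0.le hq0.le, ← sq, hq2]
  have hfactor : (1 - (q ^ 2 : ℝ) : ℂ) ^ (1 - x) =
      (1 - q : ℂ) ^ (1 - x) * (1 + q : ℂ) ^ (1 - x) := by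
    have := Complex.mul_cpow_ofReal_nonneg (sub_nonneg.2 hq1.le) (by positivity : 0 ≤ 1 + q) (1 - x)
    push_cast at this ⊢
    rw [← this]
    ring_nf
  rw [hpow, hq2, ← eq_div_iff hne] at hcpow
  rw [hq2, ← eq_div_iff (qPochInf_self_ne_zero hq0 hq1)] at hself
  rw [negPochRatio, hcpow, hself, qGamma, qGamma, hfactor]
  have hsub : (1 - q : ℂ) ^ (1 - x) ≠ 0 :=
    Complex.cpow_ne_zero_iff.2 (Or.inl (one_sub_ofReal_ne_zero hq1))
  have hadd : (1 + q : ℂ) ^ (1 - x) ≠ 0 :=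
    Complex.cpow_ne_zero_iff.2 (Or.inl (by exact_mod_cast (by positivity : 1 + q ≠ 0)))
  field_simp

lemma tendsto_eulerLogTerm_qBracket (hq : Tendsto qs l (𝓝[<] 1)) (hx : Tendsto xs l (𝓝 x₀))
    (hx₀ : 0 ≤ x₀.re) (n : ℕ) :
    Tendsto (fun i => eulerLogTerm (fun s => Complex.log (qBracket (qs i) s)) (xs i) n) l
      (𝓝 (eulerLogTerm Complex.log x₀ n)) := by
  have hlog {s : ι → ℂ} {s₀ : ℂ} (hs : Tendsto s l (𝓝 s₀)) (hs₀ : 0 < s₀.re) :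
      Tendsto (fun i => Complex.log (qBracket (qs i) (s i))) l (𝓝 (Complex.log s₀)) :=
    (tendsto_qBracket hq hs).clog (Or.inl hs₀)
  have hn : 0 < ((n : ℂ) + 1).re := by simpa using n.cast_add_one_pos
  refine ((hlog (hx.const_add _) ?_).sub (hlog tendsto_const_nhds hn)).sub
    (hx.mul ((hlog tendsto_const_nhds ?_).sub (hlog tendsto_const_nhds hn)))
  · simpa only [Complex.add_re] using add_pos_of_pos_of_nonneg hn hx₀
  · simpa using (by positivity : (0 : ℝ) < n + 1 + 1)

lemma tendsto_inv_qGamma_of_one_lt_re (hq : Tendsto qs l (𝓝[<] 1)) (hx : Tendsto xs l (𝓝 x₀))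
    (hx₀ : 1 < x₀.re) :
    Tendsto (fun i => (qGamma (qs i) (xs i))⁻¹) l (𝓝 (Complex.Gamma x₀)⁻¹) := by
  have hx' : Tendsto (fun i => xs i - 1) l (𝓝 (x₀ - 1)) := hx.sub_const 1
  have hx₀' : 0 < (x₀ - 1).re := by simpa using hx₀
  have hre : ∀ᶠ i in l, 0 < (xs i - 1).re :=
    hx'.eventually ((isOpen_lt continuous_const Complex.continuous_re).mem_nhds hx₀')
  have hsum := tendsto_tsum_of_dominated_convergence
    (summable_one_div_nat_add_one_sq.mul_left ((‖x₀ - 1‖ + 1) ^ 2 + (‖x₀ - 1‖ + 1)))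
    (tendsto_eulerLogTerm_qBracket hq hx' hx₀'.le) ?_
  · have hlim := hsum.cexp
    rw [exp_tsum_eulerLogTerm_log hx₀', sub_add_cancel] at hlim
    refine hlim.congr' ?_
    filter_upwards [hq.eventually (Ioo_mem_nhdsLT one_pos), hre] with i ⟨hi0, hi1⟩ hi
    rw [exp_tsum_eulerLogTerm_qBracket hi0 hi1 hi.le, sub_add_cancel]
  · filter_upwards [hq.eventually (Ioo_mem_nhdsLT one_pos), hre,
      hx'.norm.eventually_le_const (lt_add_one _)] with i ⟨hi0, hi1⟩ hi hnorm n
    refine (norm_eulerLogTerm_qBracket_le hi0 hi1 hi.le n).trans ?_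
    gcongr

lemma forall_of_re_gt_of_add_one {P : ℂ → Prop} (A : ℝ) (hP : ∀ x : ℂ, A < x.re → P x)
    (hstep : ∀ x, P (x + 1) → P x) (x : ℂ) : P x := by
  obtain ⟨n, hn⟩ := exists_nat_gt (A - x.re)
  have hshift (k : ℕ) : P (x + k) → P x := by
    induction k with
    | zero => simp
    | succ k ih => exact fun h => ih (hstep _ (by simpa only [Nat.cast_succ, add_assoc] using h))
  exact hshift n (hP _ (by simpa [add_comm] using sub_lt_iff_lt_add.1 hn))

lemma tendsto_inv_qGamma (hq : Tendsto qs l (𝓝[<] 1)) (hx : Tendsto xs l (𝓝 x₀)) :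
    Tendsto (fun i => (qGamma (qs i) (xs i))⁻¹) l (𝓝 (Complex.Gamma x₀)⁻¹) := by
  induction x₀ using forall_of_re_gt_of_add_one 1 generalizing xs with
  | hP x₀ hx₀ => exact tendsto_inv_qGamma_of_one_lt_re hq hx hx₀
  | hstep x₀ ih =>
    have hlim := (tendsto_qBracket hq hx).mul (ih (hx.add_const 1))
    rw [← Complex.one_div_Gamma_eq_self_mul_one_div_Gamma_add_one] at hlim
    refine hlim.congr' ?_
    filter_upwards [hq.eventually (Ioo_mem_nhdsLT one_pos)] with i ⟨hi0, hi1⟩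
    exact (inv_qGamma_eq_qBracket_mul hi0 hi1 _).symm

lemma tendsto_qGamma (hq : Tendsto qs l (𝓝[<] 1)) (hx : Tendsto xs l (𝓝 x₀))
    (hx₀ : ∀ m : ℕ, x₀ ≠ -m) :
    Tendsto (fun i => qGamma (qs i) (xs i)) l (𝓝 (Complex.Gamma x₀)) := by
  simpa using (tendsto_inv_qGamma hq hx).inv₀ (inv_ne_zero (Complex.Gamma_ne_zero hx₀))

lemma tendsto_negPochRatio_of_re_pos (hq : Tendsto qs l (𝓝[<] 1)) (hx : Tendsto xs l (𝓝 x₀))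
    (hx₀ : 0 < x₀.re) :
    Tendsto (fun i => negPochRatio (qs i) (xs i)) l (𝓝 (2 ^ (1 - x₀))) := by
  have hq1 : Tendsto qs l (𝓝 1) := hq.mono_right nhdsWithin_le_nhds
  have hIoo : ∀ᶠ i in l, qs i ∈ Set.Ioo 0 1 := hq.eventually (Ioo_mem_nhdsLT one_pos)
  have hsq : Tendsto (fun i => qs i ^ 2) l (𝓝[<] 1) := by
    refine tendsto_nhdsWithin_iff.2 ⟨by simpa using hq1.pow 2, ?_⟩
    filter_upwards [hIoo] with i ⟨hi0, hi1⟩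
    exact pow_lt_one₀ hi0.le hi1 two_ne_zero
  have hpole (m : ℕ) : x₀ ≠ -m := fun h => by
    rw [h] at hx₀
    exact (m.cast_nonneg (α := ℝ)).not_gt (by simpa using hx₀)
  have htwo : Tendsto (fun i => (1 + qs i : ℂ)) l (𝓝 2) := by
    simpa only [Complex.ofReal_one, one_add_one_eq_two] using hq1.ofReal.const_add (1 : ℂ)
  have hlim := (htwo.cpow (hx.const_sub 1) (by simp)).mul
    ((tendsto_qGamma hq hx hpole).div (tendsto_qGamma hsq hx hpole) (Complex.Gamma_ne_zero hpole))
  rw [div_self (Complex.Gamma_ne_zero hpole), mul_one] at hlim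
  refine hlim.congr' ?_
  filter_upwards [hIoo, hx.eventually
    ((isOpen_lt continuous_const Complex.continuous_re).mem_nhds hx₀)] with i ⟨hi0, hi1⟩ hi
  exact (negPochRatio_eq_qGamma_div_qGamma_sq hi0 hi1 hi).symm

lemma tendsto_negPochRatio (hq : Tendsto qs l (𝓝[<] 1)) (hx : Tendsto xs l (𝓝 x₀)) :
    Tendsto (fun i => negPochRatio (qs i) (xs i)) l (𝓝 (2 ^ (1 - x₀))) := by
  induction x₀ using forall_of_re_gt_of_add_one 0 generalizing xs with
  | hP x₀ hx₀ => exact tendsto_negPochRatio_of_re_pos hq hx hx₀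
  | hstep x₀ ih =>
    have hpow : Tendsto (fun i => (qs i : ℂ) ^ xs i) l (𝓝 1) := by
      simpa using (hq.mono_right nhdsWithin_le_nhds).ofReal.cpow hx (by simp)
    have hlim := (hpow.const_add 1).mul (ih (hx.add_const 1))
    have htwo : (1 + 1) * (2 : ℂ) ^ (1 - (x₀ + 1)) = 2 ^ (1 - x₀) := by
      rw [show 1 - x₀ = 1 + (1 - (x₀ + 1)) by ring, Complex.cpow_add _ _ two_ne_zero,
        Complex.cpow_one, one_add_one_eq_two]
    rw [htwo] at hlim
    refine hlim.congr' ?_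
    filter_upwards [hq.eventually (Ioo_mem_nhdsLT one_pos)] with i ⟨hi0, hi1⟩
    exact (negPochRatio_eq_one_add_mul hi0 hi1 _).symm

end QGamma

section AskeyWilson

/-- The normalised Askey–Wilson weight: `2 * π * √(1 - x ^ 2)` times the density at
`x = (z + z⁻¹) / 2` of the continuous part of the Askey–Wilson law with parameters `A, B, C, D`. -/
noncomputable def askeyWilsonWeight (A B C D q z : ℂ) : ℂ :=
  qPochInf q q * qPochInf (A * B) q * qPochInf (A * C) q * qPochInf (A * D) q *
      qPochInf (B * C) q * qPochInf (B * D) q * qPochInf (C * D) q *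
      qPochInf (z ^ 2) q * qPochInf (z⁻¹ ^ 2) q /
    (qPochInf (A * B * C * D) q *
      (qPochInf (A * z) q * qPochInf (B * z) q * qPochInf (C * z) q * qPochInf (D * z) q) *
      (qPochInf (A * z⁻¹) q * qPochInf (B * z⁻¹) q * qPochInf (C * z⁻¹) q * qPochInf (D * z⁻¹) q))

lemma qPochInf_quotient_eq_qGamma_quotient {q : ℝ} (hq0 : 0 < q) (hq1 : q < 1) (a b c d ζ : ℂ) :
    qPochInf q q * qPochInf ((q : ℂ) ^ (a + c)) q * qPochInf ((q : ℂ) ^ (b + d)) q *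
          (qPochInf ((q : ℂ) ^ (2 * ζ)) q * qPochInf ((q : ℂ) ^ (-(2 * ζ))) q) /
        (qPochInf ((q : ℂ) ^ (a + b + c + d)) q *
          (qPochInf ((q : ℂ) ^ (a + ζ)) q * qPochInf ((q : ℂ) ^ (a - ζ)) q) *
          (qPochInf ((q : ℂ) ^ (c + ζ)) q * qPochInf ((q : ℂ) ^ (c - ζ)) q)) =
      (1 - q : ℂ) ^ (2 * (a + c) - 1) *
        (qGamma q (a + b + c + d) * (qGamma q (a + ζ) * qGamma q (a - ζ)) *
            (qGamma q (c + ζ) * qGamma q (c - ζ)) /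
          (qGamma q (a + c) * qGamma q (b + d) * (qGamma q (2 * ζ) * qGamma q (-(2 * ζ))))) := by
  have hsub := one_sub_ofReal_ne_zero hq1
  have hexp : (1 - q : ℂ) ^ (1 - (a + c)) * (1 - q : ℂ) ^ (1 - (b + d)) *
      ((1 - q : ℂ) ^ (1 - 2 * ζ) * (1 - q : ℂ) ^ (1 - -(2 * ζ))) /
      ((1 - q : ℂ) ^ (1 - (a + b + c + d)) *
        ((1 - q : ℂ) ^ (1 - (a + ζ)) * (1 - q : ℂ) ^ (1 - (a - ζ))) *
        ((1 - q : ℂ) ^ (1 - (c + ζ)) * (1 - q : ℂ) ^ (1 - (c - ζ)))) =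
      (1 - q : ℂ) ^ (2 * (a + c) - 1) := by
    simp only [← Complex.cpow_add _ _ hsub, ← Complex.cpow_sub _ _ hsub]
    ring_nf
  rw [← hexp]
  conv_rhs => rw [← mul_div_mul_left _ _ (pow_ne_zero 5 (qPochInf_self_ne_zero hq0 hq1))]
  simp only [qPochInf_eq_mul_inv_qGamma hq0 hq1, div_eq_mul_inv, mul_inv, inv_inv]
  ring

lemma qPochInf_neg_quotient_eq_negPochRatio_quotient {q : ℝ} (hq0 : 0 < q) (hq1 : q < 1)
    (a b c d ζ : ℂ) :
    qPochInf (-((q : ℂ) ^ (a + b))) q * qPochInf (-((q : ℂ) ^ (a + d))) q *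
          qPochInf (-((q : ℂ) ^ (b + c))) q * qPochInf (-((q : ℂ) ^ (c + d))) q /
        (qPochInf (-((q : ℂ) ^ (b + ζ))) q * qPochInf (-((q : ℂ) ^ (b - ζ))) q *
          (qPochInf (-((q : ℂ) ^ (d + ζ))) q * qPochInf (-((q : ℂ) ^ (d - ζ))) q)) =
      negPochRatio q (a + b) * negPochRatio q (a + d) * negPochRatio q (b + c) *
          negPochRatio q (c + d) /
        (negPochRatio q (b + ζ) * negPochRatio q (b - ζ) *
          (negPochRatio q (d + ζ) * negPochRatio q (d - ζ))) := by
  conv_rhs => rw [← mul_div_mul_left _ _ (pow_ne_zero 4 (qPochInf_neg_self_ne_zero hq0 hq1))]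
  simp only [qPochInf_neg_eq_mul_negPochRatio hq0 hq1]
  ring

lemma askeyWilsonWeight_cpow {q : ℝ} (hq0 : 0 < q) (hq1 : q < 1) (a b c d ζ : ℂ) :
    askeyWilsonWeight ((q : ℂ) ^ a) (-((q : ℂ) ^ b)) ((q : ℂ) ^ c) (-((q : ℂ) ^ d)) q
        ((q : ℂ) ^ ζ) =
      (1 - q : ℂ) ^ (2 * (a + c) - 1) *
        (qGamma q (a + b + c + d) * (qGamma q (a + ζ) * qGamma q (a - ζ)) *
            (qGamma q (c + ζ) * qGamma q (c - ζ)) /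
          (qGamma q (a + c) * qGamma q (b + d) * (qGamma q (2 * ζ) * qGamma q (-(2 * ζ))))) *
        (negPochRatio q (a + b) * negPochRatio q (a + d) * negPochRatio q (b + c) *
            negPochRatio q (c + d) /
          (negPochRatio q (b + ζ) * negPochRatio q (b - ζ) *
            (negPochRatio q (d + ζ) * negPochRatio q (d - ζ)))) := by
  have hmul (s s' : ℂ) : (q : ℂ) ^ s * (q : ℂ) ^ s' = (q : ℂ) ^ (s + s') :=
    (Complex.cpow_add _ _ (Complex.ofReal_ne_zero.2 hq0.ne')).symm
  rw [← qPochInf_quotient_eq_qGamma_quotient hq0 hq1,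
    ← qPochInf_neg_quotient_eq_negPochRatio_quotient hq0 hq1, askeyWilsonWeight,
    ← Complex.cpow_neg]
  simp only [sq, mul_neg, neg_mul, neg_neg, hmul, ← sub_eq_add_neg, ← two_mul]
  rw [div_mul_div_comm]
  congr 1 <;> ring

variable {ι : Type*} {l : Filter ι} {q : ι → ℝ} {ζ : ι → ℂ} {ζ₀ : ℂ}

lemma tendsto_negPochRatio_quotient (hq : Tendsto q l (𝓝[<] 1)) (hζ : Tendsto ζ l (𝓝 ζ₀))
    (a b c d : ℂ) :
    Tendsto (fun i => negPochRatio (q i) (a + b) * negPochRatio (q i) (a + d) *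
          negPochRatio (q i) (b + c) * negPochRatio (q i) (c + d) /
        (negPochRatio (q i) (b + ζ i) * negPochRatio (q i) (b - ζ i) *
          (negPochRatio (q i) (d + ζ i) * negPochRatio (q i) (d - ζ i)))) l
      (𝓝 (2 ^ (-(2 * (a + c))))) := by
  have hR {s : ι → ℂ} {s₀ : ℂ} (hs : Tendsto s l (𝓝 s₀)) := tendsto_negPochRatio hq hs
  have hR_const (s : ℂ) := hR (tendsto_const_nhds (x := s))
  have htwo : (2 : ℂ) ^ (1 - (a + b)) * 2 ^ (1 - (a + d)) * 2 ^ (1 - (b + c)) *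
      2 ^ (1 - (c + d)) / (2 ^ (1 - (b + ζ₀)) * 2 ^ (1 - (b - ζ₀)) *
      (2 ^ (1 - (d + ζ₀)) * 2 ^ (1 - (d - ζ₀)))) = 2 ^ (-(2 * (a + c))) := by
    simp only [← Complex.cpow_add _ _ (two_ne_zero (α := ℂ)),
      ← Complex.cpow_sub _ _ (two_ne_zero (α := ℂ))]
    ring_nf
  rw [← htwo]
  exact ((((hR_const (a + b)).mul (hR_const (a + d))).mul (hR_const (b + c))).mul
    (hR_const (c + d))).div (((hR (hζ.const_add b)).mul (hR (hζ.const_sub b))).mul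
    ((hR (hζ.const_add d)).mul (hR (hζ.const_sub d)))) (by simp)

lemma tendsto_askeyWilsonWeight {a b c d : ℂ} (hq : Tendsto q l (𝓝[<] 1)) (hζ : Tendsto ζ l (𝓝 ζ₀))
    (hpole : ∀ s ∈ ({a + c, b + d, a + b + c + d, a + ζ₀, a - ζ₀, c + ζ₀, c - ζ₀, 2 * ζ₀,
      -(2 * ζ₀)} : Set ℂ), ∀ m : ℕ, s ≠ -m) :
    Tendsto (fun i => (1 - q i : ℂ) ^ (1 - 2 * (a + c)) * askeyWilsonWeight ((q i : ℂ) ^ a)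
        (-((q i : ℂ) ^ b)) ((q i : ℂ) ^ c) (-((q i : ℂ) ^ d)) (q i) ((q i : ℂ) ^ ζ i)) l
      (𝓝 (Complex.Gamma (a + b + c + d) * (Complex.Gamma (a + ζ₀) * Complex.Gamma (a - ζ₀)) *
          (Complex.Gamma (c + ζ₀) * Complex.Gamma (c - ζ₀)) /
        (Complex.Gamma (a + c) * Complex.Gamma (b + d) *
          (Complex.Gamma (2 * ζ₀) * Complex.Gamma (-(2 * ζ₀)))) * 2 ^ (-(2 * (a + c))))) := by
  simp only [Set.mem_insert_iff, Set.mem_singleton_iff, forall_eq_or_imp, forall_eq] at hpole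
  obtain ⟨hac, hbd, habcd, haζ, haζ', hcζ, hcζ', h2ζ, h2ζ'⟩ := hpole
  have hG {s : ι → ℂ} {s₀ : ℂ} (hs : Tendsto s l (𝓝 s₀)) (hs₀ : ∀ m : ℕ, s₀ ≠ -m) :=
    tendsto_qGamma hq hs hs₀
  have hG_const {s : ℂ} (hs : ∀ m : ℕ, s ≠ -m) := hG (tendsto_const_nhds (x := s)) hs
  have hGamma := (((hG_const habcd).mul ((hG (hζ.const_add a) haζ).mul
      (hG (hζ.const_sub a) haζ'))).mul ((hG (hζ.const_add c) hcζ).mul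
      (hG (hζ.const_sub c) hcζ'))).div (((hG_const hac).mul (hG_const hbd)).mul
      ((hG (hζ.const_mul 2) h2ζ).mul (hG (hζ.const_mul 2).neg h2ζ'))) (by
    simp only [ne_eq, mul_eq_zero, Complex.Gamma_ne_zero, hac, hbd, h2ζ, h2ζ', not_false_eq_true,
      implies_true, or_self])
  refine (hGamma.mul (tendsto_negPochRatio_quotient hq hζ a b c d)).congr' ?_
  filter_upwards [hq.eventually (Ioo_mem_nhdsLT one_pos)] with i ⟨hi0, hi1⟩
  have hcancel : (1 - q i : ℂ) ^ (1 - 2 * (a + c)) * (1 - q i : ℂ) ^ (2 * (a + c) - 1) = 1 := by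
    rw [← Complex.cpow_add _ _ (one_sub_ofReal_ne_zero hi1)]
    simp
  rw [askeyWilsonWeight_cpow hi0 hi1, mul_assoc (_ ^ (2 * (a + c) - 1)),
    ← mul_assoc (_ ^ (1 - 2 * (a + c))), hcancel, one_mul]
  rfl

end AskeyWilson

section WeakAsymmetryScaling

lemma qN_pos (N : ℕ) : 0 < qN N := Real.exp_pos _

lemma log_qN (N : ℕ) : Real.log (qN N) = -2 / Real.sqrt N := Real.log_exp _

lemma tendsto_sqrt_natCast_atTop : Tendsto (fun N : ℕ => Real.sqrt N) atTop atTop :=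
  Real.tendsto_sqrt_atTop.comp tendsto_natCast_atTop_atTop

lemma tendsto_qN : Tendsto qN atTop (𝓝[<] 1) := by
  refine tendsto_nhdsWithin_iff.2 ⟨?_, ?_⟩
  · have hlim := (tendsto_sqrt_natCast_atTop.const_div_atTop (-2)).rexp
    rwa [Real.exp_zero] at hlim
  · filter_upwards [eventually_gt_atTop 0] with N hN
    have : 0 < Real.sqrt N := Real.sqrt_pos.2 (Nat.cast_pos.2 hN)
    exact Real.exp_lt_one_iff.2 (div_neg_of_neg_of_pos (by norm_num) this)

lemma qpow_eq_cpow (N : ℕ) (x : ℝ) : qpow N x = (qN N : ℂ) ^ (x : ℂ) := by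
  rw [qpow, qN, ← Complex.ofReal_cpow (Real.exp_pos _).le, ← Real.exp_mul, div_mul_eq_mul_div]

lemma eI_eq_cpow {N : ℕ} (hN : N ≠ 0) (θ : ℝ) :
    eI θ = (qN N : ℂ) ^ (-((Real.sqrt N * θ / 2 : ℝ) * Complex.I)) := by
  have hsqrt : (Real.sqrt N : ℂ) ≠ 0 :=
    Complex.ofReal_ne_zero.2 (Real.sqrt_pos.2 (Nat.cast_pos.2 hN.bot_lt)).ne'
  rw [eI, Complex.cpow_def_of_ne_zero (Complex.ofReal_ne_zero.2 (qN_pos N).ne'),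
    ← Complex.ofReal_log (qN_pos N).le, log_qN]
  push_cast
  field_simp

lemma arccos_one_sub_two_mul_sq {s : ℝ} (hs0 : 0 ≤ s) (hs1 : s ≤ 1) :
    Real.arccos (1 - 2 * s ^ 2) = 2 * Real.arcsin s := by
  have hcos : Real.cos (2 * Real.arcsin s) = 1 - 2 * s ^ 2 := by
    rw [Real.cos_two_mul, Real.cos_sq', Real.sin_arcsin (by linarith) hs1]
    ring
  rw [← hcos, Real.arccos_cos]
  · exact mul_nonneg zero_le_two (Real.arcsin_nonneg.2 hs0)
  · linarith [Real.arcsin_le_pi_div_two s]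

lemma tendsto_mul_arccos_one_sub {c : ℝ} (hc : 0 ≤ c) :
    Tendsto (fun x : ℝ => x * Real.arccos (1 - c ^ 2 / (2 * x ^ 2))) atTop (𝓝 c) := by
  have hs : Tendsto (fun x : ℝ => c / 2 / x) atTop (𝓝 0) := tendsto_id.const_div_atTop _
  have harcsin : HasDerivAt Real.arcsin 1 0 := by
    simpa using Real.hasDerivAt_arcsin (x := 0) (by norm_num) (by norm_num)
  have hdslope : Tendsto (fun x : ℝ => dslope Real.arcsin 0 (c / 2 / x)) atTop (𝓝 1) := by
    have := (continuousAt_dslope_same.2 harcsin.differentiableAt).tendsto.comp hs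
    rwa [dslope_same, harcsin.deriv] at this
  have hlim := hdslope.const_mul c
  rw [mul_one] at hlim
  refine hlim.congr' ?_
  filter_upwards [eventually_gt_atTop 0, hs.eventually_le_const one_pos] with x hx hx1
  have hsub := sub_smul_dslope Real.arcsin 0 (c / 2 / x)
  rw [smul_eq_mul, Real.arcsin_zero, sub_zero, sub_zero] at hsub
  have hsq : c ^ 2 / (2 * x ^ 2) = 2 * (c / 2 / x) ^ 2 := by
    field_simp
  rw [hsq, arccos_one_sub_two_mul_sq (by positivity) hx1, ← hsub]
  field_simp

lemma tendsto_sqrt_mul_arccos {y : ℝ} (hy : 0 ≤ y) :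
    Tendsto (fun N : ℕ => Real.sqrt N * Real.arccos (1 - y / (2 * (N : ℝ)))) atTop
      (𝓝 (Real.sqrt y)) := by
  refine ((tendsto_mul_arccos_one_sub (Real.sqrt_nonneg y)).comp
    tendsto_sqrt_natCast_atTop).congr fun N => ?_
  rw [Function.comp_apply, Real.sq_sqrt hy, Real.sq_sqrt N.cast_nonneg]

lemma tendsto_sqrt_mul_one_sub_qN :
    Tendsto (fun N : ℕ => Real.sqrt N * (1 - qN N)) atTop (𝓝 2) := by
  have harg : Tendsto (fun N : ℕ => -2 / Real.sqrt N) atTop (𝓝 0) :=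
    tendsto_sqrt_natCast_atTop.const_div_atTop _
  have hdslope : Tendsto (fun N : ℕ => dslope Real.exp 0 (-2 / Real.sqrt N)) atTop (𝓝 1) := by
    have := (continuousAt_dslope_same.2 Real.differentiableAt_exp).tendsto.comp harg
    rwa [dslope_same, Real.deriv_exp, Real.exp_zero] at this
  have hlim := hdslope.const_mul 2
  rw [mul_one] at hlim
  refine hlim.congr' ?_
  filter_upwards [eventually_gt_atTop 0] with N hN
  have hsqrt : 0 < Real.sqrt N := Real.sqrt_pos.2 (Nat.cast_pos.2 hN)
  have hsub := sub_smul_dslope Real.exp 0 (-2 / Real.sqrt N)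
  rw [smul_eq_mul, Real.exp_zero, sub_zero, ← qN] at hsub
  rw [← neg_sub (qN N), ← hsub]
  field_simp

lemma tendsto_density_prefactor (s : ℝ) {y : ℝ} (hy : 0 < y) :
    Tendsto (fun N : ℕ => (N : ℝ) ^ s / (4 * Real.pi * N * Real.sqrt (y / N) *
        Real.sqrt (1 - y / (4 * N))) * (1 - qN N) ^ (2 * s - 1)) atTop
      (𝓝 (2 ^ (2 * s - 1) / (4 * Real.pi * Real.sqrt y))) := by
  have hroot : Tendsto (fun N : ℕ => Real.sqrt (1 - y / (4 * N))) atTop (𝓝 1) := by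
    have : Tendsto (fun N : ℕ => y / (4 * (N : ℝ))) atTop (𝓝 0) :=
      (tendsto_natCast_atTop_atTop.const_mul_atTop four_pos).const_div_atTop y
    simpa using (this.const_sub 1).sqrt
  have hlim := (tendsto_sqrt_mul_one_sub_qN.rpow_const (p := 2 * s - 1) (Or.inl two_ne_zero)).div
    (hroot.const_mul (4 * Real.pi * Real.sqrt y)) (by positivity)
  rw [mul_one] at hlim
  refine hlim.congr' ?_
  filter_upwards [eventually_gt_atTop 0, tendsto_qN.eventually (Ioo_mem_nhdsLT one_pos)]
    with N hN ⟨_, hq1⟩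
  have hN' : (0 : ℝ) < N := Nat.cast_pos.2 hN
  have hsqrt : 0 < Real.sqrt N := Real.sqrt_pos.2 hN'
  have hpow : Real.sqrt N ^ (2 * s - 1) = (N : ℝ) ^ s / Real.sqrt N := by
    rw [Real.rpow_sub hsqrt, Real.rpow_one, Real.rpow_mul hsqrt.le, Real.rpow_two,
      Real.sq_sqrt hN'.le]
  rw [Pi.div_apply, Real.mul_rpow hsqrt.le (sub_pos.2 hq1).le, hpow, Real.sqrt_div hy.le]
  field_simp
  rw [Real.sq_sqrt hN'.le]

lemma qpow_mul (N : ℕ) (x x' : ℝ) : qpow N x * qpow N x' = qpow N (x + x') := by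
  rw [qpow, qpow, qpow, ← Complex.ofReal_mul, ← Real.exp_add]
  ring_nf

lemma inv_eI (θ : ℝ) : (eI θ)⁻¹ = eI (-θ) := by
  rw [eI, eI, ← Complex.exp_neg, Complex.ofReal_neg, mul_neg]

lemma eI_sq (θ : ℝ) : eI θ ^ 2 = eI (2 * θ) := by
  rw [eI, eI, ← Complex.exp_nat_mul]
  push_cast
  ring_nf

lemma askeyWilsonWeight_qpow (N : ℕ) (θ u v w r t : ℝ) :
    askeyWilsonWeight (qpow N (v + t / 2)) (-qpow N (w + t / 2)) (qpow N (u - t / 2))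
        (-qpow N (r - t / 2)) (qN N) (eI θ) =
      qPochInf (qN N) (qN N) * qPochInf (-qpow N (v + w + t)) (qN N) *
          qPochInf (qpow N (u + v)) (qN N) * qPochInf (-qpow N (v + r)) (qN N) *
          qPochInf (-qpow N (u + w)) (qN N) * qPochInf (qpow N (w + r)) (qN N) *
          qPochInf (-qpow N (u + r - t)) (qN N) * qPochInf (eI (2 * θ)) (qN N) *
          qPochInf (eI (-2 * θ)) (qN N) /
        (qPochInf (qpow N (u + v + w + r)) (qN N) *
          (qPochInf (qpow N (v + t / 2) * eI θ) (qN N) *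
            qPochInf (-qpow N (w + t / 2) * eI θ) (qN N) *
            qPochInf (qpow N (u - t / 2) * eI θ) (qN N) *
            qPochInf (-qpow N (r - t / 2) * eI θ) (qN N)) *
          (qPochInf (qpow N (v + t / 2) * eI (-θ)) (qN N) *
            qPochInf (-qpow N (w + t / 2) * eI (-θ)) (qN N) *
            qPochInf (qpow N (u - t / 2) * eI (-θ)) (qN N) *
            qPochInf (-qpow N (r - t / 2) * eI (-θ)) (qN N))) := by
  simp only [askeyWilsonWeight, inv_eI, eI_sq, mul_neg, neg_mul, neg_neg, qpow_mul]
  ring_nf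

lemma tendsto_askeyWilsonWeight_qpow {a b c d y : ℝ} (hac : ∀ m : ℕ, a + c ≠ -m)
    (hbd : ∀ m : ℕ, b + d ≠ -m) (habcd : ∀ m : ℕ, a + b + c + d ≠ -m) (hy : 0 < y) :
    Tendsto (fun N : ℕ => Complex.ofReal ((1 - qN N) ^ (1 - 2 * (a + c))) *
        askeyWilsonWeight (qpow N a) (-qpow N b) (qpow N c) (-qpow N d) (qN N)
          (eI (Real.arccos (1 - y / (2 * (N : ℝ)))))) atTop
      (𝓝 (Complex.Gamma ((a + b + c + d : ℝ) : ℂ) * GammaSq a (Real.sqrt y / 2) *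
          GammaSq c (Real.sqrt y / 2) /
        (Complex.Gamma ((a + c : ℝ) : ℂ) * Complex.Gamma ((b + d : ℝ) : ℂ) *
          GammaSq 0 (Real.sqrt y)) * Complex.ofReal (2 ^ (-(2 * (a + c)))))) := by
  have hζ := ((tendsto_sqrt_mul_arccos hy.le).div_const 2).ofReal.mul_const Complex.I
  have hnonreal (s : ℂ) (hs : s.im ≠ 0) (m : ℕ) : s ≠ -m := fun h => hs (by simp [h])
  have hsqrt : Real.sqrt y ≠ 0 := (Real.sqrt_pos.2 hy).ne'
  have hlim := tendsto_askeyWilsonWeight (a := a) (b := b) (c := c) (d := d) tendsto_qN hζ.neg (by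
    simp only [Set.mem_insert_iff, Set.mem_singleton_iff, forall_eq_or_imp, forall_eq]
    refine ⟨?_, ?_, ?_, ?_, ?_, ?_, ?_, ?_, ?_⟩
    · exact_mod_cast hac
    · exact_mod_cast hbd
    · exact_mod_cast habcd
    all_goals exact hnonreal _ (by simpa using hsqrt))
  have htwo : (2 : ℂ) ^ (-(2 * (a + c)) : ℂ) = ((2 ^ (-(2 * (a + c))) : ℝ) : ℂ) := by
    rw [Complex.ofReal_cpow zero_le_two]
    push_cast
    rfl
  convert hlim.congr' ?_ using 2
  · rw [htwo]
    simp only [GammaSq]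
    push_cast
    ring_nf
  · filter_upwards [eventually_ne_atTop 0, tendsto_qN.eventually (Ioo_mem_nhdsLT one_pos)]
      with N hN ⟨_, hq1⟩
    rw [Complex.ofReal_cpow (sub_pos.2 hq1).le]
    simp only [qpow_eq_cpow, eI_eq_cpow hN]
    push_cast
    ring_nf

end WeakAsymmetryScaling

theorem statement0_general (u v w r t y : ℝ) (huv : ∀ m : ℕ, u + v ≠ -m)
    (hwr : ∀ m : ℕ, w + r ≠ -m) (huvwr : ∀ m : ℕ, u + v + w + r ≠ -m) (hy : 0 < y) :
    Tendsto (fun N : ℕ =>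
      Complex.ofReal ((N : ℝ) ^ (u + v)) *
      ((qPochInf (Complex.ofReal (qN N)) (qN N) *
        qPochInf (-(qpow N (v + w + t))) (qN N) *
        qPochInf (qpow N (u + v)) (qN N) *
        qPochInf (-(qpow N (v + r))) (qN N) *
        qPochInf (-(qpow N (u + w))) (qN N) *
        qPochInf (qpow N (w + r)) (qN N) *
        qPochInf (-(qpow N (u + r - t))) (qN N) *
        qPochInf (eI (2 * Real.arccos (1 - y / (2 * (N : ℝ))))) (qN N) *
        qPochInf (eI (-2 * Real.arccos (1 - y / (2 * (N : ℝ))))) (qN N)) /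
       (Complex.ofReal (4 * Real.pi * (N : ℝ)) * qPochInf (qpow N (u + v + w + r)) (qN N) *
        Complex.ofReal (Real.sqrt (y / (N : ℝ))) *
        Complex.ofReal (Real.sqrt (1 - y / (4 * (N : ℝ)))) *
        ((qPochInf (qpow N (v + t / 2) * eI (Real.arccos (1 - y / (2 * (N : ℝ))))) (qN N) *
          qPochInf (-(qpow N (w + t / 2)) * eI (Real.arccos (1 - y / (2 * (N : ℝ))))) (qN N) *
          qPochInf (qpow N (u - t / 2) * eI (Real.arccos (1 - y / (2 * (N : ℝ))))) (qN N) *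
          qPochInf (-(qpow N (r - t / 2)) * eI (Real.arccos (1 - y / (2 * (N : ℝ))))) (qN N)) *
         (qPochInf (qpow N (v + t / 2) * eI (-(Real.arccos (1 - y / (2 * (N : ℝ)))))) (qN N) *
          qPochInf (-(qpow N (w + t / 2)) * eI (-(Real.arccos (1 - y / (2 * (N : ℝ)))))) (qN N) *
          qPochInf (qpow N (u - t / 2) * eI (-(Real.arccos (1 - y / (2 * (N : ℝ)))))) (qN N) *
          qPochInf (-(qpow N (r - t / 2)) * eI (-(Real.arccos (1 - y / (2 * (N : ℝ)))))) (qN N))))))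
      atTop
      (nhds (Complex.Gamma ((u + v + w + r : ℝ) : ℂ) * GammaSq (v + t / 2) (Real.sqrt y / 2) *
        GammaSq (u - t / 2) (Real.sqrt y / 2) /
        (Complex.ofReal (8 * Real.pi) * Complex.Gamma ((u + v : ℝ) : ℂ) *
         Complex.Gamma ((w + r : ℝ) : ℂ) * Complex.ofReal (Real.sqrt y) *
         GammaSq 0 (Real.sqrt y)))) := by
  have hvu : v + t / 2 + (u - t / 2) = u + v := by ring
  have hsum : v + t / 2 + (w + t / 2) + (u - t / 2) + (r - t / 2) = u + v + w + r := by ring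
  have hwr' : w + t / 2 + (r - t / 2) = w + r := by ring
  have hweight := tendsto_askeyWilsonWeight_qpow (a := v + t / 2) (b := w + t / 2)
    (c := u - t / 2) (d := r - t / 2) (hvu ▸ huv) (hwr' ▸ hwr) (hsum ▸ huvwr) hy
  rw [hvu, hsum, hwr'] at hweight
  have hconst : 2 ^ (2 * (u + v) - 1) / (4 * Real.pi * Real.sqrt y) * 2 ^ (-(2 * (u + v))) =
      1 / (8 * Real.pi * Real.sqrt y) := by
    rw [Real.rpow_sub_one two_ne_zero, Real.rpow_neg zero_le_two]
    field_simp
    norm_num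
  convert ((tendsto_density_prefactor (u + v) hy).ofReal.mul hweight).congr' ?_ using 2
  · rw [mul_comm _ (Complex.ofReal (2 ^ _)), ← mul_assoc (Complex.ofReal (_ / _)),
      ← Complex.ofReal_mul, hconst]
    push_cast
    ring
  · filter_upwards [tendsto_qN.eventually (Ioo_mem_nhdsLT one_pos)] with N ⟨_, hq1⟩
    have hcancel : (1 - qN N) ^ (2 * (u + v) - 1) * (1 - qN N) ^ (1 - 2 * (u + v)) = 1 := by
      rw [← Real.rpow_add (sub_pos.2 hq1)]
      norm_num
    rw [askeyWilsonWeight_qpow, ← mul_assoc, ← Complex.ofReal_mul, mul_assoc, hcancel, mul_one]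
    push_cast
    ring

theorem statement0 (u v w r t y : ℝ) (huv : 0 < u + v) (hw : 0 < w) (hr : 0 < r)
    (ht1 : -(2 * w) < t) (ht2 : t < 2 * r) (hy : 0 < y) :
    Tendsto (fun N : ℕ =>
      Complex.ofReal ((N : ℝ) ^ (u + v)) *
      ((qPochInf (Complex.ofReal (qN N)) (qN N) *
        qPochInf (-(qpow N (v + w + t))) (qN N) *
        qPochInf (qpow N (u + v)) (qN N) *
        qPochInf (-(qpow N (v + r))) (qN N) *
        qPochInf (-(qpow N (u + w))) (qN N) *
        qPochInf (qpow N (w + r)) (qN N) *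
        qPochInf (-(qpow N (u + r - t))) (qN N) *
        qPochInf (eI (2 * Real.arccos (1 - y / (2 * (N : ℝ))))) (qN N) *
        qPochInf (eI (-2 * Real.arccos (1 - y / (2 * (N : ℝ))))) (qN N)) /
       (Complex.ofReal (4 * Real.pi * (N : ℝ)) * qPochInf (qpow N (u + v + w + r)) (qN N) *
        Complex.ofReal (Real.sqrt (y / (N : ℝ))) *
        Complex.ofReal (Real.sqrt (1 - y / (4 * (N : ℝ)))) *
        ((qPochInf (qpow N (v + t / 2) * eI (Real.arccos (1 - y / (2 * (N : ℝ))))) (qN N) *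
          qPochInf (-(qpow N (w + t / 2)) * eI (Real.arccos (1 - y / (2 * (N : ℝ))))) (qN N) *
          qPochInf (qpow N (u - t / 2) * eI (Real.arccos (1 - y / (2 * (N : ℝ))))) (qN N) *
          qPochInf (-(qpow N (r - t / 2)) * eI (Real.arccos (1 - y / (2 * (N : ℝ))))) (qN N)) *
         (qPochInf (qpow N (v + t / 2) * eI (-(Real.arccos (1 - y / (2 * (N : ℝ)))))) (qN N) *
          qPochInf (-(qpow N (w + t / 2)) * eI (-(Real.arccos (1 - y / (2 * (N : ℝ)))))) (qN N) *
          qPochInf (qpow N (u - t / 2) * eI (-(Real.arccos (1 - y / (2 * (N : ℝ)))))) (qN N) *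
          qPochInf (-(qpow N (r - t / 2)) * eI (-(Real.arccos (1 - y / (2 * (N : ℝ)))))) (qN N))))))
      atTop
      (nhds (Complex.Gamma ((u + v + w + r : ℝ) : ℂ) * GammaSq (v + t / 2) (Real.sqrt y / 2) *
        GammaSq (u - t / 2) (Real.sqrt y / 2) /
        (Complex.ofReal (8 * Real.pi) * Complex.Gamma ((u + v : ℝ) : ℂ) *
         Complex.Gamma ((w + r : ℝ) : ℂ) * Complex.ofReal (Real.sqrt y) *
         GammaSq 0 (Real.sqrt y)))) := by
  have hpole {s : ℝ} (hs : 0 < s) (m : ℕ) : s ≠ -m :=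
    ((neg_nonpos.2 m.cast_nonneg).trans_lt hs).ne'
  exact statement0_general u v w r t y (hpole huv) (hpole (add_pos hw hr))
    (hpole (by linarith)) hy
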